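/- For integers m ≥ 3 and N ≥ m, one has Γ(2N + m) / Γ(N + 1)² ≤ (4^N · 2^m · e^{m²/(2N)} / √(2π)) · N^{m−1}. -/

import Mathlib

open Real

/-!
Stirling's formula bounds `Γ(2N + m)` above by `√(2π) ((2N + m)/e)^(2N + m)` and `Γ(N + 1)²` below
by `2πN (N/e)^(2N)`. Writing `2N + m = 2N (1 + m/(2N))` and using `1 + t ≤ e^t`, the numerator is at
most `√(2π) (2N/e)^(2N) (2N)^m e^(m²/(2N))`, so the factors `(N/e)^(2N)` cancel in the quotient.
-/

theorem factorial_le_exp_one_mul_sqrt_mul_pow {n : ℕ} (hn : n ≠ 0) :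
    (n.factorial : ℝ) ≤ exp 1 * √n * (n / exp 1) ^ n := by
  have stirlingSeq_le : Stirling.stirlingSeq n ≤ exp 1 / √2 := by
    obtain ⟨k, rfl⟩ := Nat.exists_eq_succ_of_ne_zero hn
    rw [← Stirling.stirlingSeq_one]
    exact Stirling.stirlingSeq'_antitone k.zero_le
  have : (0 : ℝ) < n := by exact_mod_cast Nat.pos_of_ne_zero hn
  rw [Stirling.stirlingSeq, div_le_iff₀ (by positivity)] at stirlingSeq_le
  calc (n.factorial : ℝ) ≤ exp 1 / √2 * (√(2 * n) * (n / exp 1) ^ n) := stirlingSeq_le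
    _ = exp 1 * √n * (n / exp 1) ^ n := by
      rw [sqrt_mul zero_le_two]
      field_simp

theorem Gamma_natCast_le_sqrt_two_pi_mul_pow {k : ℕ} (hk : 2 ≤ k) :
    Gamma k ≤ √(2 * π) * (k / exp 1) ^ k := by
  have two_le : (2 : ℝ) ≤ k := by exact_mod_cast hk
  have k_pos : (0 : ℝ) < k := by linarith
  have exp_one_le : exp 1 ≤ √(2 * π) * √k := by
    rw [← sqrt_mul (by positivity)]
    apply le_sqrt_of_sq_le
    nlinarith [exp_one_lt_d9, exp_pos 1, pi_gt_three]
  refine le_of_mul_le_mul_left ?_ k_pos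
  calc (k : ℝ) * Gamma k = k.factorial := by
        rw [← Gamma_add_one k_pos.ne', Gamma_nat_eq_factorial]
    _ ≤ exp 1 * √k * (k / exp 1) ^ k := factorial_le_exp_one_mul_sqrt_mul_pow (by omega)
    _ ≤ √(2 * π) * √k * √k * (k / exp 1) ^ k := by gcongr
    _ = k * (√(2 * π) * (k / exp 1) ^ k) := by
      rw [mul_assoc √(2 * π), mul_self_sqrt k_pos.le]
      ring

theorem two_pi_mul_mul_pow_le_Gamma_add_one_sq (n : ℕ) :
    2 * π * n * (n / exp 1) ^ (2 * n) ≤ Gamma (n + 1) ^ 2 := by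
  calc 2 * π * n * (n / exp 1) ^ (2 * n) = (√(2 * π * n) * (n / exp 1) ^ n) ^ 2 := by
        rw [mul_pow, sq_sqrt (by positivity), ← pow_mul, mul_comm n 2]
    _ ≤ Gamma (n + 1) ^ 2 := by
      rw [Gamma_nat_eq_factorial]
      gcongr
      exact Stirling.le_factorial_stirling n

theorem add_pow_le_pow_mul_exp {x y : ℝ} (hx : 0 < x) (hxy : 0 ≤ x + y) (n : ℕ) :
    (x + y) ^ n ≤ x ^ n * exp (n * (y / x)) := by
  have add_le : x + y ≤ x * exp (y / x) := by
    calc x + y = x * (y / x + 1) := by field_simp; ring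
      _ ≤ x * exp (y / x) := by gcongr; exact add_one_le_exp _
  calc (x + y) ^ n ≤ (x * exp (y / x)) ^ n := by gcongr
    _ = x ^ n * exp (n * (y / x)) := by rw [mul_pow, exp_nat_mul]

theorem add_div_exp_one_pow_add_le {n : ℕ} (hn : n ≠ 0) (m : ℕ) :
    ((n + m : ℝ) / exp 1) ^ (n + m) ≤ (n / exp 1) ^ n * n ^ m * exp ((m : ℝ) ^ 2 / n) := by
  have n_pos : (0 : ℝ) < n := by exact_mod_cast Nat.pos_of_ne_zero hn
  have exp_eq : exp ((n + m : ℕ) * (m / n : ℝ)) = exp 1 ^ m * exp ((m : ℝ) ^ 2 / n) := by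
    rw [← exp_nat_mul, ← exp_add]
    congr 1
    push_cast
    field_simp
  calc ((n + m : ℝ) / exp 1) ^ (n + m)
      = (n + m : ℝ) ^ (n + m) / exp 1 ^ (n + m) := div_pow _ _ _
    _ ≤ (n : ℝ) ^ (n + m) * exp ((n + m : ℕ) * (m / n : ℝ)) / exp 1 ^ (n + m) := by
      gcongr
      exact add_pow_le_pow_mul_exp n_pos (by positivity) _
    _ = (n / exp 1) ^ n * n ^ m * exp ((m : ℝ) ^ 2 / n) := by
      rw [exp_eq, pow_add, pow_add, div_pow]
      field_simp

theorem Gamma_natCast_add_le {n m : ℕ} (hn : n ≠ 0) (hnm : 2 ≤ n + m) :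
    Gamma (n + m) ≤ √(2 * π) * ((n / exp 1) ^ n * n ^ m * exp ((m : ℝ) ^ 2 / n)) := by
  calc Gamma (n + m) ≤ √(2 * π) * ((n + m : ℝ) / exp 1) ^ (n + m) := by
        exact_mod_cast Gamma_natCast_le_sqrt_two_pi_mul_pow hnm
    _ ≤ √(2 * π) * ((n / exp 1) ^ n * n ^ m * exp ((m : ℝ) ^ 2 / n)) := by
      gcongr
      exact add_div_exp_one_pow_add_le hn m

theorem gamma_ratio_bound_general {m N : ℕ} (hm : m ≠ 0) (hN : N ≠ 0) :
    Gamma (2 * N + m) / Gamma (N + 1) ^ 2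
      ≤ 4 ^ N * 2 ^ m * exp ((m : ℝ) ^ 2 / (2 * N)) / √(2 * π) * (N : ℝ) ^ (m - 1) := by
  have : (0 : ℝ) < N := by exact_mod_cast Nat.pos_of_ne_zero hN
  have numerator_le : Gamma (2 * N + m) ≤
      √(2 * π) * ((2 * N / exp 1) ^ (2 * N) * (2 * N) ^ m * exp ((m : ℝ) ^ 2 / (2 * N))) := by
    exact_mod_cast Gamma_natCast_add_le (n := 2 * N) (m := m) (by omega) (by omega)
  have two_mul_pow : (2 * N / exp 1) ^ (2 * N) = 4 ^ N * (N / exp 1) ^ (2 * N) := by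
    rw [mul_div_assoc, mul_pow, pow_mul 2]
    norm_num
  have pow_eq : (N : ℝ) ^ m = N ^ (m - 1) * N := (pow_sub_one_mul hm _).symm
  calc Gamma (2 * N + m) / Gamma (N + 1) ^ 2
      ≤ √(2 * π) * ((2 * N / exp 1) ^ (2 * N) * (2 * N) ^ m * exp ((m : ℝ) ^ 2 / (2 * N))) /
          (2 * π * N * (N / exp 1) ^ (2 * N)) := by
        gcongr
        exact two_pi_mul_mul_pow_le_Gamma_add_one_sq N
    _ = √(2 * π) / (2 * π) *
          (4 ^ N * 2 ^ m * exp ((m : ℝ) ^ 2 / (2 * N)) * (N : ℝ) ^ (m - 1)) := by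
        rw [two_mul_pow, mul_pow 2, pow_eq]
        field_simp
    _ = 4 ^ N * 2 ^ m * exp ((m : ℝ) ^ 2 / (2 * N)) / √(2 * π) * (N : ℝ) ^ (m - 1) := by
        rw [sqrt_div_self']
        ring

theorem gamma_ratio_bound (m N : ℕ) (hm : 3 ≤ m) (hN : m ≤ N) :
    Real.Gamma (2 * N + m) / Real.Gamma (N + 1) ^ 2
      ≤ 4 ^ N * 2 ^ m * Real.exp ((m : ℝ) ^ 2 / (2 * N)) / Real.sqrt (2 * π) *
          (N : ℝ) ^ (m - 1) :=
  gamma_ratio_bound_general (by omega) (by omega)
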